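/- arXiv:1902.00446 — 2 statements merged into one kernel-verified Lean document; each statement's English description precedes it below -/
import Mathlib

section
/- For every positive integer n, there exists an n-satisfactory coloring of K_n if and only if T_n essentially tiles the nonnegative orthant O_n; that is, if and only if there exists a set B ⊆ ℤ^{π(n)} such that every element of T_n + B has a unique representation as a + b with a ∈ T_n, b ∈ B, and O_n ⊆ T_n + B. -/
/-- The `n`-core: the set of `n`-smooth positive integers. -/
def Kcore (n : ℕ) : Set ℕ := {m : ℕ | 0 < m ∧ ∀ p : ℕ, p.Prime → p ∣ m → p ≤ n}

/-- The primes `p ≤ n`, indexing the coordinates of `ℤ^{π(n)}`. -/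
def PrimesLE (n : ℕ) := {p : ℕ // p.Prime ∧ p ≤ n}

/-- The map `t : K_n → ℤ^{π(n)}` sending `m` to its vector of prime exponents. -/
def expVec (n m : ℕ) : PrimesLE n → ℤ := fun p => (m.factorization p.1 : ℤ)

/-- The polyomino `T_n = t({1,…,n}) ⊆ ℤ^{π(n)}`. -/
def Tpoly (n : ℕ) : Set (PrimesLE n → ℤ) := expVec n '' (Set.Icc 1 n)

/-- The nonnegative orthant `O_n ⊆ ℤ^{π(n)}`. -/
def Orthant (n : ℕ) : Set (PrimesLE n → ℤ) := {v | ∀ p, 0 ≤ v p}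

/-!
Prime factorization turns an `n`-satisfactory coloring of `K_n` into a coloring of the orthant
`O_n` for which every translate of `T_n` based in `O_n` is rainbow, i.e. uses each of its `n`
colors exactly once.

Given an essential tiling `O_n ⊆ T_n + B`, color `x` by the tile element `a` in `x = a + b`.
Conversely, every point of the lattice enters the orthant under all sufficiently large shifts, so
the limit of the shifts of a rainbow coloring along an ultrafilter is a rainbow coloring of the
whole lattice. Then `-y + T_n` has exactly one point of any given color `k`, which says that
`y - a` lies in `B = -f⁻¹(k)` for exactly one `a ∈ T_n`.
-/

open Set Filter

section Coloring

variable {G κ : Type*} [AddCommGroup G] {e : κ → G} {C : Set κ} {O : Set G} {f : G → κ}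

/-- `f` colors `O` with colors from `C`, and every translate based in `O` of the tile `e '' C` is
rainbow: its points have pairwise distinct colors. The tile is indexed by the colors themselves, so
it has as many elements as there are colors when `e` is injective on `C`. -/
structure IsRainbowColoring (e : κ → G) (C : Set κ) (O : Set G) (f : G → κ) : Prop where
  mapsTo : MapsTo f O C
  injOn : ∀ x ∈ O, InjOn (fun i => f (e i + x)) C

/-- `T` tiles some superset of `O`. The superset is not mentioned: it is `T + B`. -/
def EssentiallyTiles (T O : Set G) : Prop :=
  ∃ B : Set G, (∀ x ∈ O, ∃ a ∈ T, ∃ b ∈ B, x = a + b) ∧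
    ∀ a ∈ T, ∀ b ∈ B, ∀ a' ∈ T, ∀ b' ∈ B, a + b = a' + b' → a = a' ∧ b = b'

theorem EssentiallyTiles.of_isComplement {T B : Set G} (h : AddSubgroup.IsComplement T B)
    (O : Set G) : EssentiallyTiles T O := by
  refine ⟨B, fun x _ => ?_, fun a ha b hb a' ha' b' hb' hab => ?_⟩
  · obtain ⟨⟨a, b⟩, hab⟩ := h.surjective x
    exact ⟨a, a.2, b, b.2, hab.symm⟩
  · have hpair : ((⟨a, ha⟩, ⟨b, hb⟩) : T × B) = (⟨a', ha'⟩, ⟨b', hb'⟩) := h.injective hab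
    simpa using hpair

theorem EssentiallyTiles.exists_isRainbowColoring (h : EssentiallyTiles (e '' C) O)
    (he : InjOn e C) (hO : O.Nonempty) (hO_add : ∀ x ∈ O, ∀ i ∈ C, e i + x ∈ O) :
    ∃ f, IsRainbowColoring e C O f := by
  obtain ⟨B, hcover, hunique⟩ := h
  have hcolor : ∀ x ∈ O, ∃ i ∈ C, ∃ b ∈ B, x = e i + b := by simpa using hcover
  have : Nonempty κ := hO.elim fun x hx => ⟨(hcolor x hx).choose⟩
  choose! f hfC hf using hcolor
  refine ⟨f, hfC, fun x hx i hi j hj (hij : f (e i + x) = f (e j + x)) => ?_⟩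
  obtain ⟨b, hb, hib⟩ := hf _ (hO_add x hx i hi)
  obtain ⟨b', hb', hjb'⟩ := hf _ (hO_add x hx j hj)
  have hswap : e i + b' = e j + b := by
    rw [← hij] at hjb'
    linear_combination (norm := module) hib - hjb'
  exact he hi hj
    (hunique _ (mem_image_of_mem e hi) _ hb' _ (mem_image_of_mem e hj) _ hb hswap).1

theorem IsRainbowColoring.isComplement (hf : IsRainbowColoring e C univ f) (hC : C.Finite)
    {k : κ} (hk : k ∈ C) : AddSubgroup.IsComplement (e '' C) {b | f (-b) = k} := by
  refine AddSubgroup.isComplement_iff_existsUnique_neg_add_mem.2 fun y => ?_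
  have hbij : BijOn (fun i => f (e i + -y)) C C :=
    (hC.injOn_iff_bijOn_of_mapsTo fun i _ => hf.mapsTo (mem_univ _)).1 (hf.injOn _ (mem_univ _))
  obtain ⟨i, hi, hik⟩ := hbij.surjOn hk
  refine ⟨⟨e i, mem_image_of_mem e hi⟩, by simpa [add_comm] using hik, ?_⟩
  rintro ⟨_, j, hj, rfl⟩ hjk
  have hjk' : f (e j + -y) = k := by simpa [add_comm] using hjk
  simp [hbij.injOn hj hi (hjk'.trans hik.symm)]

section Ordered

variable [PartialOrder G] [IsOrderedAddMonoid G] [IsDirectedOrder G]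

theorem IsRainbowColoring.exists_univ (hf : IsRainbowColoring e C (Ici 0) f) (hC : C.Finite) :
    ∃ g, IsRainbowColoring e C univ g := by
  let U : Ultrafilter G := Ultrafilter.of atTop
  have hcone (x : G) : ∀ᶠ s in U, x + s ∈ Ici 0 :=
    Ultrafilter.of_le atTop <|
      (eventually_ge_atTop (-x)).mono fun _ => neg_le_iff_add_nonneg'.1
  have hlimit (x : G) : ∃ k ∈ C, ∀ᶠ s in U, f (x + s) = k :=
    (Ultrafilter.eventually_exists_mem_iff hC).1 <|
      (hcone x).mono fun s hs => ⟨f (x + s), hf.mapsTo hs, rfl⟩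
  choose g hgC hg using hlimit
  refine ⟨g, fun x _ => hgC x, fun x _ i hi j hj hij => ?_⟩
  obtain ⟨s, hs, hfi, hfj⟩ := ((hcone x).and ((hg (e i + x)).and (hg (e j + x)))).exists
  apply hf.injOn (x + s) hs hi hj
  calc f (e i + (x + s)) = g (e i + x) := by rw [← add_assoc, hfi]
    _ = g (e j + x) := hij
    _ = f (e j + (x + s)) := by rw [← add_assoc, hfj]

theorem exists_isRainbowColoring_iff_essentiallyTiles (hC : C.Finite) (he : InjOn e C)
    (he_nonneg : ∀ i ∈ C, 0 ≤ e i) :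
    (∃ f, IsRainbowColoring e C (Ici 0) f) ↔ EssentiallyTiles (e '' C) (Ici 0) := by
  constructor
  · rintro ⟨f, hf⟩
    obtain ⟨g, hg⟩ := hf.exists_univ hC
    exact .of_isComplement (hg.isComplement hC (hg.mapsTo (mem_univ 0))) _
  · exact fun h => h.exists_isRainbowColoring he nonempty_Ici
      fun x hx i hi => add_nonneg (he_nonneg i hi) hx

end Ordered

end Coloring

theorem injOn_iff_forall_lt_ne {α β : Type*} [LinearOrder α] {f : α → β} {s : Set α} :
    InjOn f s ↔ ∀ i ∈ s, ∀ j ∈ s, i < j → f i ≠ f j := by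
  refine ⟨fun h i hi j hj hij => h.ne hi hj hij.ne, fun h i hi j hj hij => ?_⟩
  by_contra hne
  rcases lt_or_gt_of_ne hne with hlt | hgt
  · exact h i hi j hj hlt hij
  · exact h j hj i hi hgt hij.symm

section ExponentVector

variable {n i a : ℕ}

theorem expVec_mul (n : ℕ) (hi : i ≠ 0) (ha : a ≠ 0) :
    expVec n (i * a) = expVec n i + expVec n a := by
  funext p
  simp [expVec, Nat.factorization_mul hi ha]

theorem expVec_nonneg (n m : ℕ) : 0 ≤ expVec n m := fun _ => Int.natCast_nonneg _

theorem Icc_one_subset_Kcore (n : ℕ) : Icc 1 n ⊆ Kcore n := fun _ hi =>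
  ⟨hi.1, fun _ _ hp => (Nat.le_of_dvd hi.1 hp).trans hi.2⟩

theorem mul_mem_Kcore (hi : i ∈ Kcore n) (ha : a ∈ Kcore n) : i * a ∈ Kcore n :=
  ⟨Nat.mul_pos hi.1 ha.1, fun p hp hdvd => (hp.dvd_mul.1 hdvd).elim (hi.2 p hp) (ha.2 p hp)⟩

theorem injOn_expVec_Kcore (n : ℕ) : InjOn (expVec n) (Kcore n) := by
  intro a ha b hb hab
  refine Nat.eq_of_factorization_eq ha.1.ne' hb.1.ne' fun p => ?_
  by_cases hp : p.Prime ∧ p ≤ n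
  · exact Int.natCast_inj.1 (congrFun hab ⟨p, hp⟩)
  · have hzero : ∀ m ∈ Kcore n, m.factorization p = 0 := fun m hm =>
      (Nat.factorization_eq_zero_iff m p).2 <| by
        by_contra! h
        exact hp ⟨h.1, hm.2 p h.1 h.2.1⟩
    rw [hzero a ha, hzero b hb]

theorem surjOn_expVec_Kcore (n : ℕ) : SurjOn (expVec n) (Kcore n) (Orthant n) := by
  intro v hv
  have : Finite (PrimesLE n) := ((finite_Iic n).subset fun _ hp => hp.2).to_subtype
  let φ : ℕ →₀ ℕ := (Finsupp.equivFunOnFinite.symm fun p => (v p).toNat).embDomain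
    (⟨Subtype.val, Subtype.val_injective⟩ : PrimesLE n ↪ ℕ)
  have hφ_support : ∀ q ∈ φ.support, q.Prime ∧ q ≤ n := by
    intro q hq
    rw [Finsupp.support_embDomain, Finset.mem_map] at hq
    obtain ⟨p, -, rfl⟩ := hq
    exact p.2
  have hφ_apply (p : PrimesLE n) : φ p.1 = (v p).toNat := Finsupp.embDomain_apply_self _ _ p
  have hfactorization : (φ.prod (· ^ ·)).factorization = φ :=
    Nat.prod_pow_factorization_eq_self fun q hq => (hφ_support q hq).1
  have hne_zero : φ.prod (· ^ ·) ≠ 0 :=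
    Finset.prod_ne_zero_iff.2 fun q hq => pow_ne_zero _ (hφ_support q hq).1.ne_zero
  refine ⟨φ.prod (· ^ ·), ⟨hne_zero.bot_lt, fun q hq hdvd => (hφ_support q ?_).2⟩, ?_⟩
  · rw [← hfactorization, Finsupp.mem_support_iff]
    exact (hq.factorization_pos_of_dvd hne_zero hdvd).ne'
  · funext p
    rw [expVec, hfactorization, hφ_apply, Int.toNat_of_nonneg (hv p)]

theorem image_expVec_Kcore (n : ℕ) : expVec n '' Kcore n = Orthant n :=
  (surjOn_expVec_Kcore n).image_eq_of_mapsTo fun m _ => expVec_nonneg n m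

end ExponentVector

section SatisfactoryColoring

variable {n : ℕ} {c : ℕ → ℕ}

/-- `c` restricts to an `n`-satisfactory coloring of `K_n`; its values outside `K_n` are
irrelevant. -/
def IsSatisfactoryColoring (n : ℕ) (c : ℕ → ℕ) : Prop :=
  (∀ m ∈ Kcore n, c m ∈ Finset.Icc 1 n) ∧
    ∀ a ∈ Kcore n, ∀ i j : ℕ, 1 ≤ i → i < j → j ≤ n → c (i * a) ≠ c (j * a)

theorem isSatisfactoryColoring_iff :
    IsSatisfactoryColoring n c ↔
      MapsTo c (Kcore n) (Icc 1 n) ∧ ∀ a ∈ Kcore n, InjOn (fun i => c (i * a)) (Icc 1 n) := by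
  simp only [IsSatisfactoryColoring, injOn_iff_forall_lt_ne, MapsTo, mem_Icc, Finset.mem_Icc]
  refine and_congr_right fun _ => forall₂_congr fun a _ => ?_
  exact ⟨fun h i hi j hj hij => h i j hi.1 hij hj.2, fun h i j hi hij hj =>
    h i ⟨hi, hij.le.trans hj⟩ j ⟨hi.trans hij.le, hj⟩ hij⟩

theorem IsSatisfactoryColoring.congr {c' : ℕ → ℕ} (hc : IsSatisfactoryColoring n c)
    (hcc' : EqOn c c' (Kcore n)) : IsSatisfactoryColoring n c' := by
  rw [isSatisfactoryColoring_iff] at hc ⊢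
  exact ⟨hc.1.congr hcc', fun a ha => (hc.2 a ha).congr fun i hi =>
    hcc' (mul_mem_Kcore (Icc_one_subset_Kcore n hi) ha)⟩

theorem isSatisfactoryColoring_comp_expVec_iff {f : (PrimesLE n → ℤ) → ℕ} :
    IsSatisfactoryColoring n (f ∘ expVec n) ↔
      IsRainbowColoring (expVec n) (Icc 1 n) (Orthant n) f := by
  have hadd : ∀ a ∈ Kcore n, EqOn (fun i => (f ∘ expVec n) (i * a))
      (fun i => f (expVec n i + expVec n a)) (Icc 1 n) := fun a ha i hi =>
    congrArg f (expVec_mul n (Nat.one_le_iff_ne_zero.1 hi.1) ha.1.ne')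
  calc IsSatisfactoryColoring n (f ∘ expVec n)
      ↔ MapsTo (f ∘ expVec n) (Kcore n) (Icc 1 n) ∧
          ∀ a ∈ Kcore n, InjOn (fun i => f (expVec n i + expVec n a)) (Icc 1 n) :=
        isSatisfactoryColoring_iff.trans <|
          and_congr_right' <| forall₂_congr fun a ha => (hadd a ha).injOn_iff
    _ ↔ MapsTo f (Orthant n) (Icc 1 n) ∧
          ∀ x ∈ Orthant n, InjOn (fun i => f (expVec n i + x)) (Icc 1 n) := by
        rw [← image_expVec_Kcore, mapsTo_image_iff, forall_mem_image]
    _ ↔ IsRainbowColoring (expVec n) (Icc 1 n) (Orthant n) f :=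
        ⟨fun h => ⟨h.1, h.2⟩, fun h => ⟨h.mapsTo, h.injOn⟩⟩

theorem exists_isSatisfactoryColoring_iff_exists_isRainbowColoring (n : ℕ) :
    (∃ c, IsSatisfactoryColoring n c) ↔
      ∃ f, IsRainbowColoring (expVec n) (Icc 1 n) (Orthant n) f := by
  refine ⟨fun ⟨c, hc⟩ => ?_, fun ⟨f, hf⟩ =>
    ⟨f ∘ expVec n, isSatisfactoryColoring_comp_expVec_iff.2 hf⟩⟩
  refine ⟨c ∘ Function.invFunOn (expVec n) (Kcore n),
    isSatisfactoryColoring_comp_expVec_iff.1 (hc.congr fun m hm => ?_)⟩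
  exact congrArg c ((injOn_expVec_Kcore n).leftInvOn_invFunOn hm).symm

end SatisfactoryColoring

/-- There is an `n`-satisfactory coloring of `K_n` iff `T_n` essentially tiles the
nonnegative orthant `O_n`: there is `B ⊆ ℤ^{π(n)}` such that every element of
`T_n + B` has a unique representation `a + b` with `a ∈ T_n`, `b ∈ B`, and
`O_n ⊆ T_n + B`. -/
theorem satisfactory_coloring_iff_essential_tiling (n : ℕ) (hn : 0 < n) :
    (∃ c : ℕ → ℕ,
      (∀ m ∈ Kcore n, c m ∈ Finset.Icc 1 n) ∧
      (∀ a ∈ Kcore n, ∀ i j : ℕ, 1 ≤ i → i < j → j ≤ n →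
        c (i * a) ≠ c (j * a))) ↔
    (∃ B : Set (PrimesLE n → ℤ),
      (Orthant n ⊆ {x | ∃ a ∈ Tpoly n, ∃ b ∈ B, x = a + b}) ∧
      (∀ a ∈ Tpoly n, ∀ b ∈ B, ∀ a' ∈ Tpoly n, ∀ b' ∈ B,
        a + b = a' + b' → a = a' ∧ b = b')) :=
  (exists_isSatisfactoryColoring_iff_exists_isRainbowColoring n).trans <|
    exists_isRainbowColoring_iff_essentiallyTiles (finite_Icc 1 n)
      ((injOn_expVec_Kcore n).mono (Icc_one_subset_Kcore n)) fun i _ => expVec_nonneg n i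
end

section
/- For every integer k > 2, the set of primes p that are k-representatives is finite; that is, there are only finitely many primes p of the form p = kn + 1 for which 1^k, 2^k, …, n^k are pairwise incongruent modulo p. -/
/-!
Let `ζ` be a primitive `k`-th root of unity modulo `p = k * n + 1`. If `k ^ 3 < p`, the pigeonhole
principle applied to the triples `(x, ζ * x, ζ ^ 2 * x)` gives a nonzero residue `d` such that
`d`, `ζ * d` and `ζ ^ 2 * d` are represented by integers of absolute value at most `n`. Two of these
three integers have the same sign, so their absolute values are distinct elements of `{1, …, n}`
with equal `k`-th powers modulo `p`. Hence every `k`-representative is at most `k ^ 3`.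
-/

lemma abs_natCast_sub_lt_of_div_eq {a b m : ℕ} (hm : 0 < m) (h : a / m = b / m) :
    |(a : ℤ) - b| < m := by
  have hdiff : (a : ℤ) - b = (a % m : ℕ) - (b % m : ℕ) := by
    have ha := Nat.div_add_mod a m
    have hb := Nat.div_add_mod b m
    rw [h] at ha
    omega
  rw [hdiff]
  exact Int.abs_sub_lt_of_lt_lt (Nat.mod_lt b hm) (Nat.mod_lt a hm)

lemma exists_ne_zero_forall_abs_lt_and_intCast_eq_mul {ι : Type*} [Fintype ι] {N m B : ℕ}
    (hcover : N ≤ B * m) (hcard : B ^ Fintype.card ι < N) (c : ι → ZMod N) :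
    ∃ d : ZMod N, d ≠ 0 ∧ ∃ a : ι → ℤ, ∀ i, |a i| < m ∧ (a i : ZMod N) = c i * d := by
  have hN : 0 < N := by omega
  have hm : 0 < m := Nat.pos_of_mul_pos_left (hN.trans_le hcover)
  have : NeZero N := ⟨hN.ne'⟩
  have hbox (x : ZMod N) : x.val / m < B :=
    Nat.div_lt_of_lt_mul ((x.val_lt.trans_le hcover).trans_eq (mul_comm B m))
  let box (x : ZMod N) (i : ι) : Fin B := ⟨(c i * x).val / m, hbox _⟩
  obtain ⟨x, y, hxy, hboxes⟩ : ∃ x y, x ≠ y ∧ box x = box y := by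
    classical
    exact Fintype.exists_ne_map_eq_of_card_lt box (by simpa using hcard)
  refine ⟨x - y, sub_ne_zero.mpr hxy, fun i ↦ (c i * x).val - (c i * y).val, fun i ↦ ⟨?_, ?_⟩⟩
  · exact abs_natCast_sub_lt_of_div_eq hm (Fin.val_eq_of_eq (congrFun hboxes i))
  · simp [mul_sub]

lemma exists_ne_sign_eq {ι : Type*} [Fintype ι] (hι : 2 < Fintype.card ι) {a : ι → ℤ}
    (ha : ∀ i, a i ≠ 0) : ∃ i j, i ≠ j ∧ (a i).sign = (a j).sign := by
  obtain ⟨i, j, hij, hpos⟩ :=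
    Fintype.exists_ne_map_eq_of_card_lt (fun i ↦ decide (0 < a i)) (by simpa using hι)
  refine ⟨i, j, hij, ?_⟩
  rw [decide_eq_decide] at hpos
  rcases (ha i).lt_or_gt with hi | hi
  · have hj : a j < 0 := (ha j).lt_of_le (not_lt.mp (hpos.not.mp hi.not_gt))
    rw [Int.sign_eq_neg_one_of_neg hi, Int.sign_eq_neg_one_of_neg hj]
  · rw [Int.sign_eq_one_of_pos hi, Int.sign_eq_one_of_pos (hpos.mp hi)]

lemma eq_of_sign_eq_of_intCast_pow_eq {R : Type*} [CommRing R] {k n : ℕ}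
    (hinj : Set.InjOn (fun i : ℕ ↦ (i : R) ^ k) (Set.Icc 1 n)) {a b : ℤ} (ha : a ≠ 0)
    (han : a.natAbs ≤ n) (hbn : b.natAbs ≤ n) (hsign : a.sign = b.sign)
    (hpow : (a : R) ^ k = (b : R) ^ k) : a = b := by
  have hb : b ≠ 0 := by rwa [ne_eq, ← Int.sign_eq_zero_iff_zero, ← hsign, Int.sign_eq_zero_iff_zero]
  have natAbs_pow (c : ℤ) : (c.natAbs : R) ^ k = (c.sign : R) ^ k * (c : R) ^ k := by
    rw [← mul_pow, ← Int.cast_mul, Int.sign_mul_self_eq_natAbs, Int.cast_natCast]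
  have hnatAbs : a.natAbs = b.natAbs := by
    refine hinj ⟨Int.natAbs_pos.mpr ha, han⟩ ⟨Int.natAbs_pos.mpr hb, hbn⟩ ?_
    simp only [natAbs_pow, hsign, hpow]
  rw [← a.sign_mul_natAbs, ← b.sign_mul_natAbs, hsign, hnatAbs]

lemma exists_isPrimitiveRoot_of_dvd_card_sub_one {F : Type*} [Field F] [Fintype F] {k : ℕ}
    (hk : k ∣ Fintype.card F - 1) : ∃ ζ : F, IsPrimitiveRoot ζ k := by
  classical
  obtain ⟨g, hg⟩ := IsCyclic.exists_ofOrder_eq_natCard (α := Fˣ)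
  rw [Nat.card_eq_fintype_card, Fintype.card_units] at hg
  obtain ⟨m, hm⟩ := hk
  have hroot : IsPrimitiveRoot (g : F) (Fintype.card F - 1) :=
    IsPrimitiveRoot.coe_units_iff.mpr (hg ▸ IsPrimitiveRoot.orderOf g)
  exact ⟨g ^ m, hroot.pow (Nat.sub_pos_of_lt Fintype.one_lt_card) (hm.trans (mul_comm k m))⟩

lemma prime_le_pow_three_of_injOn_pow {k n p : ℕ} (hk : 2 < k) (hp : p.Prime)
    (hpn : p = k * n + 1)
    (hinj : Set.InjOn (fun i : ℕ ↦ (i : ZMod p) ^ k) (Set.Icc 1 n)) : p ≤ k ^ 3 := by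
  by_contra! hlt
  have : Fact p.Prime := ⟨hp⟩
  obtain ⟨ζ, hζ⟩ : ∃ ζ : ZMod p, IsPrimitiveRoot ζ k :=
    exists_isPrimitiveRoot_of_dvd_card_sub_one ⟨n, by simp [ZMod.card, hpn]⟩
  obtain ⟨d, hd, a, ha⟩ := exists_ne_zero_forall_abs_lt_and_intCast_eq_mul
    (m := n + 1) (B := k) (by rw [mul_add]; omega) (by simpa using hlt) fun i : Fin 3 ↦ ζ ^ (i : ℕ)
  have ha_ne_zero (i : Fin 3) : a i ≠ 0 := fun h0 ↦
    mul_ne_zero (pow_ne_zero i (hζ.ne_zero (by omega))) hd (by rw [← (ha i).2, h0, Int.cast_zero])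
  have ha_le (i : Fin 3) : (a i).natAbs ≤ n := by
    rw [← Nat.lt_succ_iff, ← Int.ofNat_lt, Int.natCast_natAbs]
    exact (ha i).1
  have ha_pow (i : Fin 3) : (a i : ZMod p) ^ k = d ^ k := by
    rw [(ha i).2, mul_pow, pow_right_comm, hζ.pow_eq_one, one_pow, one_mul]
  obtain ⟨i, j, hij, hsign⟩ := exists_ne_sign_eq (by simp) ha_ne_zero
  have haij : a i = a j := eq_of_sign_eq_of_intCast_pow_eq hinj (ha_ne_zero i) (ha_le i)
    (ha_le j) hsign ((ha_pow i).trans (ha_pow j).symm)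
  have hζij : ζ ^ (i : ℕ) = ζ ^ (j : ℕ) :=
    mul_right_cancel₀ hd (by rw [← (ha i).2, ← (ha j).2, haij])
  exact hij (Fin.ext (hζ.pow_inj (i.is_lt.trans_le hk) (j.is_lt.trans_le hk) hζij))

/-- For every `k > 2` there are only finitely many `k`-representatives: primes
`p = k*n + 1` with `1^k, …, n^k` pairwise incongruent mod `p`. -/
theorem finitely_many_k_representatives (k : ℕ) (hk : 2 < k) :
    {p : ℕ | p.Prime ∧ ∃ n : ℕ, 0 < n ∧ p = k * n + 1 ∧
      ∀ i j : ℕ, 1 ≤ i → i < j → j ≤ n →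
        (i : ZMod p) ^ k ≠ (j : ZMod p) ^ k}.Finite := by
  refine (Set.finite_Iic (k ^ 3)).subset ?_
  rintro p ⟨hp, n, -, hpn, hne⟩
  refine prime_le_pow_three_of_injOn_pow hk hp hpn fun i hi j hj hij ↦ ?_
  rcases lt_trichotomy i j with hlt | heq | hgt
  · exact absurd hij (hne i j hi.1 hlt hj.2)
  · exact heq
  · exact absurd hij.symm (hne j i hj.1 hgt hi.2)
end
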